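/- arXiv:2604.14681 — 3 statements merged into one kernel-verified Lean document; each statement's English description precedes it below -/
import Mathlib

section
/- The star-exponential exp∗ is a bijection from A₀ onto the set of configuration functionals Ψ with Ψ^{(0)} = 1: for every configuration functional Ψ with Ψ^{(0)} = 1 there exists a unique Φ ∈ A₀ such that exp∗ Φ = Ψ. -/
open MeasureTheory Finset

abbrev CF (E : Type) : Type := (n : ℕ) → (Fin n → E) → ℝ

namespace CF

variable {E : Type}

/-- Symmetry of a configuration functional under permutations of the arguments. -/
def IsSymm (F : CF E) : Prop :=
  ∀ (n : ℕ) (σ : Equiv.Perm (Fin n)) (x : Fin n → E), F n (x ∘ σ) = F n x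

/-- The subtuple of `x` with indices in `I`, listed in increasing order. -/
noncomputable def sub {n : ℕ} (x : Fin n → E) (I : Finset (Fin n)) : Fin I.card → E :=
  fun i => x (I.orderIsoOfFin rfl i).1

/-- The convolution `Ψ ∗ Φ`. -/
noncomputable def conv (Ψ Φ : CF E) : CF E :=
  fun n x => ∑ I : Finset (Fin n), Ψ I.card (sub x I) * Φ Iᶜ.card (sub x Iᶜ)

/-- The unit `𝟙`. -/
def unit : CF E := fun n _ => if n = 0 then 1 else 0

/-- Star-powers `Φ^{∗m}`. -/
noncomputable def starPow (Φ : CF E) : ℕ → CF E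
  | 0 => unit
  | m + 1 => conv Φ (starPow Φ m)

/-- The star-exponential `exp∗ Φ = 𝟙 + Σ_{m≥1} Φ^{∗m}/m!`; on `A₀` the sum in the
`n`-th component is finite since `(Φ^{∗m})^{(n)} = 0` for `m > n`. -/
noncomputable def starExp (Φ : CF E) : CF E :=
  fun n x => ∑ m ∈ Finset.range (n + 1), ((m.factorial : ℝ))⁻¹ * starPow Φ m n x

/-- The derivative `D_x`. -/
noncomputable def D (x : E) (Φ : CF E) : CF E := fun n y => Φ (n + 1) (Fin.cons x y)

/-- The second derivative `D_{x₁,x₂} = D_{x₁} ∘ D_{x₂}`. -/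
noncomputable def D2 (x₁ x₂ : E) (Φ : CF E) : CF E := D x₁ (D x₂ Φ)

end CF

/-!
Since `Φ⁽⁰⁾ = 0`, every nonvanishing term of `(Φ^{∗m})⁽ⁿ⁾` with `m ≥ 2` splits the `n` arguments
into at least two nonempty parts. Hence `(exp∗ Φ)⁽ⁿ⁾` is `Φ⁽ⁿ⁾` plus an expression in the `Φ⁽ᵏ⁾`
with `k < n`, and the triangular system `exp∗ Φ = Ψ` has exactly one solution `Φ`. Solving it one
component at a time, one sees that `Φ` inherits the symmetry of `Ψ`.
-/

theorem existsUnique_isFixedPt_of_wellFounded {ι : Type*} {α : ι → Type*} [∀ i, Nonempty (α i)]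
    {r : ι → ι → Prop} (hr : WellFounded r) {T : (∀ i, α i) → ∀ i, α i}
    (hT : ∀ F G i, (∀ j, r j i → F j = G j) → T F i = T G i) :
    ∃! F, Function.IsFixedPt T F := by
  classical
  let step (i : ι) (F : ∀ j, r j i → α j) : α i :=
    T (fun j => if h : r j i then F j h else Classical.arbitrary _) i
  have fix_isFixedPt : Function.IsFixedPt T (hr.fix step) := by
    funext i
    rw [hr.fix_eq]
    exact hT _ _ i fun j hj => by rw [dif_pos hj]
  refine ⟨hr.fix step, fix_isFixedPt, fun G hG => funext fun i => ?_⟩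
  induction i using hr.induction with
  | _ i ih =>
    calc G i = T G i := (congrFun hG i).symm
      _ = T (hr.fix step) i := hT _ _ i ih
      _ = hr.fix step i := congrFun fix_isFixedPt i

namespace CF

variable {E : Type} {F G F' G' Φ Φ' : CF E} {k l m n : ℕ}

theorem apply_sub (F : CF E) (x : Fin n → E) {I : Finset (Fin n)} (hI : I.card = k) :
    F I.card (sub x I) = F k (x ∘ I.orderEmbOfFin hI) := by
  subst hI
  rfl

theorem apply_sub_univ (F : CF E) (x : Fin n → E) : F _ (sub x univ) = F n x := by
  have orderEmb_eq_id : id = ⇑((univ : Finset (Fin n)).orderEmbOfFin (card_fin n)) :=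
    orderEmbOfFin_unique _ (fun i => mem_univ i) strictMono_id
  rw [apply_sub F x (card_fin n), ← orderEmb_eq_id, Function.comp_id]

theorem conv_unit (F : CF E) : conv F unit = F := by
  funext n x
  have unit_compl {I : Finset (Fin n)} (hI : I ≠ univ) : (unit : CF E) _ (sub x Iᶜ) = 0 :=
    if_neg (by rwa [card_eq_zero, compl_eq_empty_iff])
  calc conv F unit n x
      = F _ (sub x univ) * unit _ (sub x univᶜ) :=
        Fintype.sum_eq_single _ fun I hI => by rw [unit_compl hI, mul_zero]
    _ = F n x := by
      rw [apply_sub_univ F x, unit, if_pos (by rw [compl_univ, card_empty]), mul_one]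

theorem conv_congr (h : ∀ i j, i + j = n → ∀ a b, F i a * G j b = F' i a * G' j b) :
    conv F G n = conv F' G' n :=
  funext fun _ => sum_congr rfl fun I _ =>
    h _ _ (by rw [card_add_card_compl, Fintype.card_fin]) _ _

theorem conv_apply_eq_zero (h : ∀ i j, i + j = n → ∀ a b, F i a * G j b = 0) :
    conv F G n = 0 :=
  funext fun _ => sum_eq_zero fun I _ =>
    h _ _ (by rw [card_add_card_compl, Fintype.card_fin]) _ _

theorem conv_congr_of_lt (hF : F 0 = 0) (hF' : F' 0 = 0) (hG : G 0 = 0) (hG' : G' 0 = 0)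
    (hFF' : ∀ k < n, F k = F' k) (hGG' : ∀ k < n, G k = G' k) :
    conv F G n = conv F' G' n := by
  refine conv_congr fun i j hij a b => ?_
  rcases i.eq_zero_or_pos with rfl | hi
  · simp [hF, hF']
  rcases j.eq_zero_or_pos with rfl | hj
  · simp [hG, hG']
  rw [hFF' i (by lia), hGG' j (by lia)]

theorem starPow_one (Φ : CF E) : starPow Φ 1 = Φ :=
  conv_unit Φ

theorem starPow_eq_zero_of_lt (hΦ : Φ 0 = 0) (hnm : n < m) : starPow Φ m n = 0 := by
  induction m generalizing n with
  | zero => lia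
  | succ m ih =>
    refine conv_apply_eq_zero fun i j hij a b => ?_
    rcases i.eq_zero_or_pos with rfl | hi
    · simp [hΦ]
    · simp [ih (show j < m by lia)]

theorem starPow_congr (h : ∀ k ≤ n, Φ k = Φ' k) : starPow Φ m n = starPow Φ' m n := by
  induction m generalizing n with
  | zero => rfl
  | succ m ih =>
    refine conv_congr fun i j hij a b => ?_
    rw [h i (by lia), ih fun k hk => h k (by lia)]

theorem starPow_add_two_congr (hΦ : Φ 0 = 0) (hΦ' : Φ' 0 = 0) (h : ∀ k < n, Φ k = Φ' k) :
    starPow Φ (m + 2) n = starPow Φ' (m + 2) n :=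
  conv_congr_of_lt hΦ hΦ' (starPow_eq_zero_of_lt hΦ m.succ_pos)
    (starPow_eq_zero_of_lt hΦ' m.succ_pos) h
    fun _ hk => starPow_congr fun _ hjk => h _ (hjk.trans_lt hk)

theorem starExp_apply_zero (Φ : CF E) : starExp Φ 0 = 1 := by
  funext x
  simp [starExp, starPow, unit]

theorem starExp_apply_succ (Φ : CF E) (n : ℕ) (x : Fin (n + 1) → E) :
    starExp Φ (n + 1) x = Φ (n + 1) x +
      ∑ m ∈ range n, ((m + 2).factorial : ℝ)⁻¹ * starPow Φ (m + 2) (n + 1) x := by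
  have starPow_zero_apply : starPow Φ 0 (n + 1) x = 0 := by simp [starPow, unit]
  rw [starExp, sum_range_succ', sum_range_succ', starPow_zero_apply, starPow_one]
  simp [add_comm (Φ (n + 1) x)]

theorem sub_starExp_congr (hΦ : Φ 0 = 0) (hΦ' : Φ' 0 = 0) (h : ∀ k < n, Φ k = Φ' k) :
    Φ n - starExp Φ n = Φ' n - starExp Φ' n := by
  cases n with
  | zero => rw [hΦ, hΦ', starExp_apply_zero, starExp_apply_zero]
  | succ n =>
    funext x
    simp only [Pi.sub_apply, starExp_apply_succ, starPow_add_two_congr hΦ hΦ' h,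
      sub_add_cancel_left]

theorem IsSymm.apply_eq_of_equiv (hF : IsSymm F) (e : Fin k ≃ Fin l) {a : Fin k → E}
    {b : Fin l → E} (hab : a = b ∘ e) : F k a = F l b := by
  obtain rfl : k = l := Fin.equiv_iff_eq.1 ⟨e⟩
  rw [hab, hF]

theorem IsSymm.apply_sub_comp (hF : IsSymm F) (σ : Equiv.Perm (Fin n)) (x : Fin n → E)
    {I J : Finset (Fin n)} (hIJ : ∀ i, i ∈ I ↔ σ i ∈ J) :
    F _ (sub (x ∘ σ) I) = F _ (sub x J) := by
  let e : Fin I.card ≃ Fin J.card :=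
    ((I.orderIsoOfFin rfl).toEquiv.trans (σ.subtypeEquiv hIJ)).trans
      (J.orderIsoOfFin rfl).toEquiv.symm
  refine hF.apply_eq_of_equiv e (funext fun i => ?_)
  simp [sub, e]

theorem IsSymm.conv (hF : IsSymm F) (hG : IsSymm G) : IsSymm (conv F G) := by
  intro n σ x
  refine Fintype.sum_equiv σ.finsetCongr _ _ fun I => ?_
  rw [hF.apply_sub_comp σ x (J := σ.finsetCongr I) (by simp),
    hG.apply_sub_comp σ x (J := (σ.finsetCongr I)ᶜ) (by simp)]

theorem IsSymm.starPow (hΦ : IsSymm Φ) (m : ℕ) : IsSymm (starPow Φ m) := by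
  induction m with
  | zero => exact fun _ _ _ => rfl
  | succ m ih => exact hΦ.conv ih

theorem IsSymm.starExp (hΦ : IsSymm Φ) : IsSymm (starExp Φ) := fun n σ x =>
  sum_congr rfl fun m _ => by rw [hΦ.starPow m n σ x]

theorem IsSymm.of_starExp (h : IsSymm (CF.starExp Φ)) (hΦ : Φ 0 = 0) : IsSymm Φ := by
  intro n
  induction n using Nat.strong_induction_on with
  | _ n ih =>
    let Φlt : CF E := fun k => if k < n then Φ k else 0
    have Φlt_zero : Φlt 0 = 0 := by simp [Φlt, hΦ]
    have Φlt_symm : IsSymm Φlt := by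
      intro k σ x
      by_cases hk : k < n
      · simpa [Φlt, hk] using ih k hk σ x
      · simp [Φlt, hk]
    have apply_eq : Φ n = CF.starExp Φ n - CF.starExp Φlt n := by
      have agree : ∀ k < n, Φ k = Φlt k := fun k hk => (if_pos hk).symm
      have Φlt_self : Φlt n = 0 := if_neg n.lt_irrefl
      have sub_eq := sub_starExp_congr hΦ Φlt_zero agree
      rw [Φlt_self, zero_sub, sub_eq_iff_eq_add] at sub_eq
      rw [sub_eq, neg_add_eq_sub]
    intro σ x
    simp only [apply_eq, Pi.sub_apply, h n σ x, Φlt_symm.starExp n σ x]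

/-- One step of the recursion for the star-logarithm of `Ψ`: the equation `starExp Φ = Ψ` is
rewritten as `Φ = Φ - starExp Φ + Ψ`, with the `0`-component of `Φ` first reset to `0` on the
right-hand side, so that its `n`-th component depends only on the components of `Φ` below `n`. -/
noncomputable def starLogStep (Ψ Φ : CF E) : CF E :=
  Function.update Φ 0 0 - starExp (Function.update Φ 0 0) + Ψ

theorem starLogStep_congr (Ψ : CF E) (h : ∀ k < n, Φ k = Φ' k) :
    starLogStep Ψ Φ n = starLogStep Ψ Φ' n := by
  have agree : ∀ k < n, Function.update Φ 0 0 k = Function.update Φ' 0 0 k := by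
    intro k hk
    rcases eq_or_ne k 0 with rfl | hk0
    · simp
    · simp [hk0, h k hk]
  simp only [starLogStep, Pi.add_apply, Pi.sub_apply,
    sub_starExp_congr (Function.update_self ..) (Function.update_self ..) agree]

theorem starLogStep_of_apply_zero (Ψ : CF E) (hΦ : Φ 0 = 0) :
    starLogStep Ψ Φ = Φ - starExp Φ + Ψ := by
  rw [starLogStep, ← hΦ, Function.update_eq_self]

theorem isFixedPt_starLogStep_iff {Ψ : CF E} (hΨ0 : Ψ 0 = 1) :
    Function.IsFixedPt (starLogStep Ψ) Φ ↔ Φ 0 = 0 ∧ starExp Φ = Ψ := by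
  have apply_zero_of_isFixedPt (hfix : Function.IsFixedPt (starLogStep Ψ) Φ) : Φ 0 = 0 := by
    rw [← hfix]
    simp [starLogStep, starExp_apply_zero, hΨ0]
  have isFixedPt_iff (hΦ : Φ 0 = 0) :
      Function.IsFixedPt (starLogStep Ψ) Φ ↔ starExp Φ = Ψ := by
    rw [Function.IsFixedPt, starLogStep_of_apply_zero Ψ hΦ, sub_add, sub_eq_self, sub_eq_zero]
  exact ⟨fun hfix => ⟨apply_zero_of_isFixedPt hfix,
    (isFixedPt_iff (apply_zero_of_isFixedPt hfix)).1 hfix⟩, fun h => (isFixedPt_iff h.1).2 h.2⟩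

end CF

open CF in
theorem starExp_bijective_general {E : Type} (Ψ : CF E) (hΨ0 : Ψ 0 = 1) :
    ∃! Φ : CF E, Φ 0 = 0 ∧ starExp Φ = Ψ :=
  (existsUnique_congr fun _ => isFixedPt_starLogStep_iff hΨ0).1
    (existsUnique_isFixedPt_of_wellFounded wellFounded_lt fun _ _ _ => starLogStep_congr Ψ)

open CF in
/-- `exp∗` is a bijection from `A₀` onto the configuration functionals
with `0`-component equal to `1`. -/
theorem starExp_bijective (E : Type) (Ψ : CF E) (hΨ0 : Ψ 0 = 1) (hΨsymm : IsSymm Ψ) :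
    ∃! Φ : CF E, Φ 0 = 0 ∧ IsSymm Φ ∧ starExp Φ = Ψ := by
  obtain ⟨Φ, ⟨hΦ0, rfl⟩, unique⟩ := starExp_bijective_general Ψ hΨ0
  exact ⟨Φ, ⟨hΦ0, hΨsymm.of_starExp hΦ0, rfl⟩, fun Φ' hΦ' => unique Φ' ⟨hΦ'.1, hΦ'.2.2⟩⟩
end

section
/- The derivative operator satisfies the chain rule with respect to the star-exponential: for every x ∈ E and every configuration functional Ψ ∈ A₀ one has D_x(exp∗ Ψ) = (exp∗ Ψ) ∗ (D_x Ψ). -/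
open MeasureTheory Finset

/-!
`D_x` is a derivation of the convolution algebra: splitting the subsets of `{0, …, n}` by whether
they contain `0` gives the Leibniz rule. A configuration functional is determined by its zeroth
component and its derivatives, so commutativity, associativity and unitality of `∗` follow from the
Leibniz rule by induction on the degree, and the Leibniz rule then gives
`D_x Ψ^{∗(m+1)} = (m+1) Ψ^{∗m} ∗ D_x Ψ`. Summing, the derivative of an exponential partial sum with
`N + 1` terms is the partial sum with `N` terms convolved with `D_x Ψ`; on `A₀` the degree-`n`
component of `exp∗ Ψ` is that of any partial sum with more than `n` terms.
-/

theorem sum_finset_fin_succ {M : Type*} [AddCommMonoid M] {n : ℕ} (g : Finset (Fin (n + 1)) → M) :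
    ∑ I, g I = ∑ I : Finset (Fin n), g (insert 0 (I.map (Fin.succEmb n))) +
      ∑ I : Finset (Fin n), g (I.map (Fin.succEmb n)) := by
  have univ_eq : (univ : Finset (Finset (Fin (n + 1)))) =
      (insert 0 (univ.map (Fin.succEmb n))).powerset := by
    rw [← powerset_univ, Fin.univ_succ, cons_eq_insert]
    rfl
  have powerset_eq : (univ.map (Fin.succEmb n)).powerset =
      univ.map ⟨Finset.map (Fin.succEmb n), map_injective _⟩ := by
    ext s
    simp [subset_map_iff, eq_comm]
  rw [univ_eq, sum_powerset_insert (by simp), powerset_eq, sum_map, sum_map, add_comm]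
  rfl

theorem compl_insert_zero_map_succEmb {n : ℕ} (I : Finset (Fin n)) :
    (insert 0 (I.map (Fin.succEmb n)))ᶜ = Iᶜ.map (Fin.succEmb n) := by
  ext j
  cases j using Fin.cases <;> simp

theorem compl_map_succEmb {n : ℕ} (I : Finset (Fin n)) :
    (I.map (Fin.succEmb n))ᶜ = insert 0 (Iᶜ.map (Fin.succEmb n)) := by
  rw [compl_eq_comm, compl_insert_zero_map_succEmb, compl_compl]

namespace CF

variable {E : Type}

theorem apply_sub_eq_apply_comp (F : CF E) {n k : ℕ} (x : Fin n → E) {I : Finset (Fin n)}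
    {f : Fin k → Fin n} (hf : StrictMono f) (range_f : Set.range f = I) :
    F #I (sub x I) = F k (x ∘ f) := by
  obtain rfl : #I = k := by
    rw [← Set.ncard_coe_finset, ← range_f, Set.ncard_range_of_injective hf.injective, Nat.card_fin]
  have f_mem (i : Fin #I) : f i ∈ I := by
    rw [← mem_coe, ← range_f]
    exact Set.mem_range_self i
  rw [orderEmbOfFin_unique rfl f_mem hf]
  rfl

theorem apply_sub_cons_map_succEmb (F : CF E) {n : ℕ} (a : E) (y : Fin n → E)
    (I : Finset (Fin n)) :
    F #(I.map (Fin.succEmb n)) (sub (Fin.cons a y) (I.map (Fin.succEmb n))) = F #I (sub y I) :=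
  apply_sub_eq_apply_comp F (Fin.cons a y) (f := Fin.succ ∘ I.orderEmbOfFin rfl)
    (Fin.strictMono_succ.comp (I.orderEmbOfFin rfl).strictMono)
    (by simp [Set.range_comp])

theorem apply_sub_cons_insert_zero (F : CF E) {n : ℕ} (a : E) (y : Fin n → E)
    (I : Finset (Fin n)) :
    F #(insert 0 (I.map (Fin.succEmb n)))
        (sub (Fin.cons a y) (insert 0 (I.map (Fin.succEmb n)))) =
      D a F #I (sub y I) := by
  have strictMono_succ_comp : StrictMono (Fin.succ ∘ I.orderEmbOfFin rfl) :=
    Fin.strictMono_succ.comp (I.orderEmbOfFin rfl).strictMono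
  rw [apply_sub_eq_apply_comp F (Fin.cons a y) (f := Fin.cons 0 (Fin.succ ∘ I.orderEmbOfFin rfl))
    (Fin.strictMono_cons.2 ⟨fun _ => Fin.succ_pos _, strictMono_succ_comp⟩)
    (by simp [Fin.range_cons, Set.range_comp]), D]
  congr 1
  funext i
  cases i using Fin.cases <;> rfl

theorem apply_succ_eq_D (F : CF E) {n : ℕ} (x : Fin (n + 1) → E) :
    F (n + 1) x = D (x 0) F n (Fin.tail x) := by
  rw [D, Fin.cons_self_tail]

theorem D_add (a : E) (F G : CF E) : D a (F + G) = D a F + D a G := rfl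

theorem D_smul (a : E) (c : ℝ) (F : CF E) : D a (c • F) = c • D a F := rfl

theorem D_unit (a : E) : D a unit = 0 := by
  funext n y
  simp [D, unit]

theorem D_conv (a : E) (F G : CF E) :
    D a (conv F G) = conv (D a F) G + conv F (D a G) := by
  funext n y
  rw [D, conv, sum_finset_fin_succ, Pi.add_apply, Pi.add_apply, conv, conv]
  congr 1 <;> refine sum_congr rfl fun I _ => ?_
  · rw [apply_sub_cons_insert_zero F, compl_insert_zero_map_succEmb, apply_sub_cons_map_succEmb G]
  · rw [apply_sub_cons_map_succEmb F, compl_map_succEmb, apply_sub_cons_insert_zero G]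

theorem conv_apply_zero (F G : CF E) (x : Fin 0 → E) : conv F G 0 x = F 0 x * G 0 x := by
  have apply_sub (H : CF E) (I : Finset (Fin 0)) : H #I (sub x I) = H 0 x :=
    apply_sub_eq_apply_comp H x strictMono_id (Subsingleton.elim _ _)
  simp only [conv, apply_sub, Fintype.sum_unique]

theorem zero_conv (F : CF E) : conv 0 F = 0 := by
  funext n x
  simp [conv]

theorem add_conv (F G H : CF E) : conv (F + G) H = conv F H + conv G H := by
  funext n x
  simp [conv, add_mul, sum_add_distrib]

theorem smul_conv (c : ℝ) (F G : CF E) : conv (c • F) G = c • conv F G := by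
  funext n x
  simp [conv, mul_sum, mul_assoc]

theorem conv_comm (F G : CF E) : conv F G = conv G F := by
  funext n
  induction n generalizing F G with
  | zero => funext x; rw [conv_apply_zero, conv_apply_zero, mul_comm]
  | succ n ih =>
    funext x
    simp only [apply_succ_eq_D, D_conv, Pi.add_apply]
    rw [ih, ih F, add_comm]

theorem conv_add (F G H : CF E) : conv F (G + H) = conv F G + conv F H := by
  simp only [conv_comm F, add_conv]

theorem conv_smul (c : ℝ) (F G : CF E) : conv F (c • G) = c • conv F G := by
  simp only [conv_comm F, smul_conv]

theorem conv_assoc (F G H : CF E) : conv (conv F G) H = conv F (conv G H) := by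
  funext n
  induction n generalizing F G H with
  | zero => funext x; simp only [conv_apply_zero, mul_assoc]
  | succ n ih =>
    funext x
    simp only [apply_succ_eq_D, D_conv, add_conv, conv_add, Pi.add_apply, ih, add_assoc]

theorem unit_conv (F : CF E) : conv unit F = F := by
  funext n
  induction n generalizing F with
  | zero => funext x; simp [conv_apply_zero, unit]
  | succ n ih =>
    funext x
    simp only [apply_succ_eq_D, D_conv, D_unit, zero_conv, zero_add, ih]

theorem conv_apply_congr_left {F F' : CF E} {n : ℕ} (h : ∀ k ≤ n, F k = F' k) (G : CF E) :
    conv F G n = conv F' G n := by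
  funext x
  refine sum_congr rfl fun I _ => ?_
  rw [h #I (card_finset_fin_le I)]

theorem conv_apply_eq_zero_of_lt_add {F G : CF E} {p q : ℕ} (hF : ∀ k < p, F k = 0)
    (hG : ∀ k < q, G k = 0) {n : ℕ} (hn : n < p + q) : conv F G n = 0 := by
  funext x
  refine sum_eq_zero fun I _ => ?_
  have card_add_card_compl : #I + #Iᶜ = n := by rw [I.card_add_card_compl, Fintype.card_fin]
  obtain hI | hI : #I < p ∨ #Iᶜ < q := by omega
  · simp [hF _ hI]
  · simp [hG _ hI]

theorem starPow_apply_eq_zero_of_lt {Ψ : CF E} (hΨ : Ψ 0 = 0) {m n : ℕ} (hn : n < m) :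
    starPow Ψ m n = 0 := by
  induction m generalizing n with
  | zero => omega
  | succ m ih =>
    exact conv_apply_eq_zero_of_lt_add (p := 1) (fun k hk => by rwa [Nat.lt_one_iff.1 hk])
      (fun _ => ih) (by omega)

theorem D_starPow_succ (a : E) (Ψ : CF E) (m : ℕ) :
    D a (starPow Ψ (m + 1)) = ((m + 1 : ℕ) : ℝ) • conv (starPow Ψ m) (D a Ψ) := by
  induction m with
  | zero => simp [starPow, conv_comm _ unit, unit_conv]
  | succ m ih =>
    calc D a (starPow Ψ (m + 2))
        = conv (D a Ψ) (starPow Ψ (m + 1)) + conv Ψ (D a (starPow Ψ (m + 1))) := D_conv ..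
      _ = conv (starPow Ψ (m + 1)) (D a Ψ) +
            ((m + 1 : ℕ) : ℝ) • conv (starPow Ψ (m + 1)) (D a Ψ) := by
          rw [ih, conv_smul, ← conv_assoc, conv_comm (D a Ψ)]
          rfl
      _ = ((m + 2 : ℕ) : ℝ) • conv (starPow Ψ (m + 1)) (D a Ψ) := by
          push_cast
          module

/-- The `N`-term partial sum `∑_{m < N} Ψ^{∗m}/m!` of the star-exponential, with the same number of
terms in every degree; `starExp` instead truncates the sum differently in each degree. -/
noncomputable def expSum (Ψ : CF E) (N : ℕ) : CF E :=
  ∑ m ∈ range N, (m.factorial : ℝ)⁻¹ • starPow Ψ m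

theorem starExp_apply_eq_expSum (Ψ : CF E) (n : ℕ) : starExp Ψ n = expSum Ψ (n + 1) n := by
  funext x
  simp [starExp, expSum]

theorem starExp_apply_eq_expSum_of_lt {Ψ : CF E} (hΨ : Ψ 0 = 0) {n N : ℕ} (hN : n < N) :
    starExp Ψ n = expSum Ψ N n := by
  rw [starExp_apply_eq_expSum, expSum, expSum, Finset.sum_apply, Finset.sum_apply]
  refine sum_subset (range_subset_range.2 hN) fun m _ hm => ?_
  have hnm : n < m := by simpa using hm
  simp [starPow_apply_eq_zero_of_lt hΨ hnm]

theorem D_expSum_succ (a : E) (Ψ : CF E) (N : ℕ) :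
    D a (expSum Ψ (N + 1)) = conv (expSum Ψ N) (D a Ψ) := by
  induction N with
  | zero => simp [expSum, starPow, D_unit, zero_conv]
  | succ N ih =>
    have factorial_inv_mul : ((N + 1).factorial : ℝ)⁻¹ * (N + 1 : ℕ) = (N.factorial : ℝ)⁻¹ := by
      rw [Nat.factorial_succ]
      push_cast
      field_simp
    rw [expSum, sum_range_succ, ← expSum, D_add, D_smul, ih, D_starPow_succ, smul_smul,
      factorial_inv_mul, ← smul_conv, ← add_conv, expSum, expSum, ← sum_range_succ]

end CF

open CF in
theorem D_starExp_general {E : Type} (x : E) (Ψ : CF E) (hΨ0 : Ψ 0 = 0) :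
    D x (starExp Ψ) = conv (starExp Ψ) (D x Ψ) := by
  funext n
  calc D x (starExp Ψ) n
      = D x (expSum Ψ (n + 2)) n := by
        funext y
        rw [D, D, starExp_apply_eq_expSum]
    _ = conv (expSum Ψ (n + 1)) (D x Ψ) n := by rw [D_expSum_succ]
    _ = conv (starExp Ψ) (D x Ψ) n :=
        conv_apply_congr_left
          (fun _ hk => (starExp_apply_eq_expSum_of_lt hΨ0 (Nat.lt_succ_of_le hk)).symm) _

open CF in
/-- the chain rule `D_x(exp∗ Ψ) = (exp∗ Ψ) ∗ (D_x Ψ)` on `A₀`. -/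
theorem D_starExp (E : Type) (x : E) (Ψ : CF E) (hΨ0 : Ψ 0 = 0) (hΨsymm : IsSymm Ψ) :
    D x (starExp Ψ) = conv (starExp Ψ) (D x Ψ) :=
  D_starExp_general x Ψ hΨ0
end

section
/- (Exponential formula for the void probability, equation (2.14).) Let d ≥ 1, let Λ ⊆ ℝ^d be a bounded measurable set, and let ρ = (ρ^{(n)})_{n≥0} be a configuration functional over E = ℝ^d with ρ^{(0)} = 1, and let ρ_T ∈ A₀ be the (unique) configuration functional with ρ = exp∗ ρ_T. Suppose each ρ_T^{(n)} is measurable and there are constants C > 0 and 0 < c < 1/2 such that for every n ≥ 0 and every x ∈ ℝ^d, ∫_{Λ^n} |ρ_T^{(n+1)}(x,y₁,…,y_n)| dy₁…dy_n ≤ n! · C · c^n. Then the series Σ_{k≥1} ((−1)^k/k!) ∫_{Λ^k} ρ_T^{(k)}(y₁,…,y_k) dy and Σ_{k≥0} ((−1)^k/k!) ∫_{Λ^k} ρ^{(k)}(y₁,…,y_k) dy converge absolutely, and Σ_{k=0}^∞ ((−1)^k/k!) ∫_{Λ^k} ρ^{(k)}(y₁,…,y_k) dy = exp( Σ_{k=1}^∞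 ((−1)^k/k!) ∫_{Λ^k} ρ_T^{(k)}(y₁,…,y_k) dy ). -/
open MeasureTheory Finset

/-- Euclidean space `ℝ^d`. -/
abbrev Euc (d : ℕ) : Type := EuclideanSpace ℝ (Fin d)

/-- The product measure on `Λ^n ⊆ (ℝ^d)^n` (Lebesgue measure restricted to `Λ`
in each coordinate). -/
noncomputable def piRestrict (d : ℕ) (Λ : Set (Euc d)) (n : ℕ) :
    MeasureTheory.Measure (Fin n → Euc d) :=
  MeasureTheory.Measure.pi fun _ => MeasureTheory.volume.restrict Λ

/-- Lebesgue measure on `(ℝ^d)^n`. -/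
noncomputable def piVol (d : ℕ) (n : ℕ) : MeasureTheory.Measure (Fin n → Euc d) :=
  MeasureTheory.Measure.pi fun _ => MeasureTheory.volume

/-!
Sending a configuration functional `F` to the power series with coefficients
`z ^ k / k! * ∫ F⁽ᵏ⁾ dμᵏ` turns convolution into multiplication: splitting `{1, …, n}` into `I` and
`Iᶜ` splits `μⁿ` as a product, and there are `n.choose k` sets `I` with `k` elements. Hence it turns
`exp∗` into substitution into the exponential series. The bound on `F` makes the coefficients of its
series summable by comparison with a geometric series, and for such absolutely summable series
evaluation at `1` commutes with substitution into an entire function.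
-/

open scoped Nat

section AbsolutelySummablePowerSeries

open PowerSeries

variable {R : Type*} [NormedCommRing R] {p q : R⟦X⟧}

theorem summable_norm_coeff_mul (hp : Summable fun k => ‖coeff k p‖)
    (hq : Summable fun k => ‖coeff k q‖) : Summable fun k => ‖coeff k (p * q)‖ := by
  simpa only [coeff_mul] using summable_norm_sum_mul_antidiagonal_of_summable_norm hp hq

theorem tsum_coeff_mul [CompleteSpace R] (hp : Summable fun k => ‖coeff k p‖)
    (hq : Summable fun k => ‖coeff k q‖) :
    ∑' k, coeff k (p * q) = (∑' k, coeff k p) * ∑' k, coeff k q := by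
  simpa only [coeff_mul] using
    (tsum_mul_tsum_eq_tsum_sum_antidiagonal_of_summable_norm hp hq).symm

theorem tsum_norm_coeff_mul_le (hp : Summable fun k => ‖coeff k p‖)
    (hq : Summable fun k => ‖coeff k q‖) :
    ∑' k, ‖coeff k (p * q)‖ ≤ (∑' k, ‖coeff k p‖) * ∑' k, ‖coeff k q‖ := by
  have hp' : Summable fun k => ‖(‖coeff k p‖)‖ := by simpa only [norm_norm] using hp
  have hq' : Summable fun k => ‖(‖coeff k q‖)‖ := by simpa only [norm_norm] using hq
  rw [tsum_mul_tsum_eq_tsum_sum_antidiagonal_of_summable_norm hp' hq']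
  refine (summable_norm_coeff_mul hp hq).tsum_le_tsum (fun k => ?_)
    (summable_norm_sum_mul_antidiagonal_of_summable_norm hp' hq').of_norm
  rw [coeff_mul]
  exact norm_sum_le_of_le _ fun _ _ => norm_mul_le _ _

theorem hasSum_coeff_one : HasSum (fun k => coeff k (1 : R⟦X⟧)) 1 := by
  simpa only [coeff_one] using hasSum_ite_eq 0 (1 : R)

theorem hasSum_norm_coeff_one : HasSum (fun k => ‖coeff k (1 : R⟦X⟧)‖) ‖(1 : R)‖ := by
  simpa only [coeff_one, apply_ite norm, norm_zero] using hasSum_ite_eq 0 ‖(1 : R)‖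

theorem summable_norm_coeff_pow (hp : Summable fun k => ‖coeff k p‖) (m : ℕ) :
    Summable fun k => ‖coeff k (p ^ m)‖ := by
  induction m with
  | zero => simpa only [pow_zero] using (hasSum_norm_coeff_one (R := R)).summable
  | succ m ih => simpa only [pow_succ] using summable_norm_coeff_mul ih hp

theorem tsum_coeff_pow [CompleteSpace R] (hp : Summable fun k => ‖coeff k p‖) (m : ℕ) :
    ∑' k, coeff k (p ^ m) = (∑' k, coeff k p) ^ m := by
  induction m with
  | zero => simpa only [pow_zero] using (hasSum_coeff_one (R := R)).tsum_eq
  | succ m ih => rw [pow_succ, tsum_coeff_mul (summable_norm_coeff_pow hp m) hp, ih, pow_succ]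

theorem tsum_norm_coeff_pow_le [NormOneClass R] (hp : Summable fun k => ‖coeff k p‖) (m : ℕ) :
    ∑' k, ‖coeff k (p ^ m)‖ ≤ (∑' k, ‖coeff k p‖) ^ m := by
  induction m with
  | zero => simpa only [pow_zero, norm_one] using (hasSum_norm_coeff_one (R := R)).tsum_eq.le
  | succ m ih =>
    rw [pow_succ, pow_succ]
    refine (tsum_norm_coeff_mul_le (summable_norm_coeff_pow hp m) hp).trans ?_
    gcongr

theorem summable_norm_coeff_mul_coeff_pow [NormOneClass R] {f : R⟦X⟧}
    (hp : Summable fun k => ‖coeff k p‖)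
    (hf : Summable fun m => ‖coeff m f‖ * (∑' k, ‖coeff k p‖) ^ m) :
    Summable fun mk : ℕ × ℕ => ‖coeff mk.1 f * coeff mk.2 (p ^ mk.1)‖ := by
  suffices Summable fun mk : ℕ × ℕ => ‖coeff mk.1 f‖ * ‖coeff mk.2 (p ^ mk.1)‖ from
    this.of_nonneg_of_le (fun _ => norm_nonneg _) fun _ => norm_mul_le _ _
  rw [summable_prod_of_nonneg fun _ => by positivity]
  refine ⟨fun m => (summable_norm_coeff_pow hp m).mul_left ‖coeff m f‖, ?_⟩
  simp only [tsum_mul_left]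
  refine hf.of_nonneg_of_le (fun m => by positivity) fun m => ?_
  gcongr
  exact tsum_norm_coeff_pow_le hp m

theorem coeff_subst_eq_tsum {S : Type*} [CommRing S] [TopologicalSpace S] {g : S⟦X⟧}
    (hg : HasSubst g) (f : S⟦X⟧) (k : ℕ) :
    coeff k (f.subst g) = ∑' m, coeff m f * coeff k (g ^ m) := by
  rw [coeff_subst' hg]
  exact (tsum_eq_finsum (coeff_subst_finite' hg f k)).symm

theorem summable_norm_coeff_subst [NormOneClass R] {f : R⟦X⟧} (hp₀ : HasSubst p)
    (hp : Summable fun k => ‖coeff k p‖)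
    (hf : Summable fun m => ‖coeff m f‖ * (∑' k, ‖coeff k p‖) ^ m) :
    Summable fun k => ‖coeff k (f.subst p)‖ := by
  have double_summable := (summable_norm_coeff_mul_coeff_pow hp hf).prod_symm
  refine double_summable.prod.of_nonneg_of_le (fun _ => norm_nonneg _) fun k => ?_
  rw [coeff_subst_eq_tsum hp₀]
  exact norm_tsum_le_tsum_norm (double_summable.prod_factor k)

theorem tsum_coeff_subst [NormOneClass R] [CompleteSpace R] {f : R⟦X⟧} (hp₀ : HasSubst p)
    (hp : Summable fun k => ‖coeff k p‖)
    (hf : Summable fun m => ‖coeff m f‖ * (∑' k, ‖coeff k p‖) ^ m) :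
    ∑' k, coeff k (f.subst p) = ∑' m, coeff m f * (∑' k, coeff k p) ^ m := by
  have double_summable := (summable_norm_coeff_mul_coeff_pow hp hf).of_norm
  calc ∑' k, coeff k (f.subst p)
      = ∑' k, ∑' m, coeff m f * coeff k (p ^ m) := by simp only [coeff_subst_eq_tsum hp₀]
    _ = ∑' m, ∑' k, coeff m f * coeff k (p ^ m) :=
        double_summable.tsum_comm (f := fun m k => coeff m f * coeff k (p ^ m))
    _ = ∑' m, coeff m f * ∑' k, coeff k (p ^ m) :=
        tsum_congr fun m => (summable_norm_coeff_pow hp m).of_norm.tsum_mul_left (coeff m f)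
    _ = ∑' m, coeff m f * (∑' k, coeff k p) ^ m := by simp only [tsum_coeff_pow hp]

theorem coeff_exp_real (m : ℕ) : coeff m (exp ℝ) = (m ! : ℝ)⁻¹ := by
  simp [coeff_exp]

theorem summable_norm_coeff_exp_mul_pow (x : ℝ) :
    Summable fun m => ‖coeff m (exp ℝ)‖ * x ^ m := by
  refine (Real.summable_pow_div_factorial x).congr fun m => ?_
  rw [coeff_exp_real, norm_inv, Real.norm_natCast, div_eq_inv_mul]

theorem tsum_coeff_exp_mul_pow (x : ℝ) : ∑' m, coeff m (exp ℝ) * x ^ m = Real.exp x := by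
  simp only [coeff_exp_real, Real.exp_eq_exp_ℝ, NormedSpace.exp_eq_tsum_div, div_eq_inv_mul]

theorem coeff_exp_subst {p : ℝ⟦X⟧} (hp : constantCoeff p = 0) (k : ℕ) :
    coeff k ((exp ℝ).subst p) = ∑ m ∈ range (k + 1), (m ! : ℝ)⁻¹ * coeff k (p ^ m) := by
  simp only [coeff_subst_eq_tsum (HasSubst.of_constantCoeff_zero' hp), coeff_exp_real]
  refine tsum_eq_sum fun m hm => ?_
  have hkm : k < m := by simpa using hm
  have coeff_pow_eq_zero : coeff k (p ^ m) = 0 := coeff_of_lt_order _ <|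
    (Nat.cast_lt.2 hkm).trans_le (le_order_pow_of_constantCoeff_eq_zero m hp)
  rw [coeff_pow_eq_zero, mul_zero]

end AbsolutelySummablePowerSeries

theorem sum_card_card_compl {α M : Type*} [Fintype α] [DecidableEq α] [AddCommMonoid M]
    (g : ℕ → ℕ → M) :
    ∑ I : Finset α, g #I #Iᶜ =
      ∑ kl ∈ antidiagonal (Fintype.card α), (Fintype.card α).choose kl.1 • g kl.1 kl.2 := by
  simp only [card_compl]
  rw [← powerset_univ, sum_powerset_apply_card fun k => g k (Fintype.card α - k),
    Finset.Nat.sum_antidiagonal_eq_sum_range_succ fun k l => (Fintype.card α).choose k • g k l,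
    card_univ]

section ProductMeasure

variable {E : Type*} [MeasurableSpace E] {μ : Measure E} {n : ℕ}

theorem lintegral_pi_cons [SigmaFinite μ] {f : (Fin (n + 1) → E) → ENNReal} (hf : Measurable f) :
    ∫⁻ x, f x ∂(Measure.pi fun _ => μ) =
      ∫⁻ x, ∫⁻ y, f (Fin.cons x y) ∂(Measure.pi fun _ => μ) ∂μ := by
  have cons_preserving := (measurePreserving_piFinSuccAbove (fun _ : Fin (n + 1) => μ) 0).symm
  rw [← cons_preserving.lintegral_comp hf, lintegral_prod _ (by fun_prop)]
  simp only [MeasurableEquiv.piFinSuccAbove_symm_apply, Fin.insertNthEquiv_zero]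
  rfl

theorem lintegral_pi_le_of_lintegral_cons_le [SigmaFinite μ]
    {f : (Fin (n + 1) → E) → ENNReal} (hf : Measurable f) {B : ENNReal}
    (hB : ∀ᵐ x ∂μ, ∫⁻ y, f (Fin.cons x y) ∂(Measure.pi fun _ => μ) ≤ B) :
    ∫⁻ x, f x ∂(Measure.pi fun _ => μ) ≤ B * μ Set.univ := by
  rw [lintegral_pi_cons hf, ← lintegral_const]
  exact lintegral_mono_ae hB

variable {V : Type*} [NormedAddCommGroup V] {f : (Fin (n + 1) → E) → V} {B : ℝ}

theorem integrable_pi_of_lintegral_cons_le [IsFiniteMeasure μ] (hf : StronglyMeasurable f)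
    (hB : ∀ᵐ x ∂μ, ∫⁻ y, ‖f (Fin.cons x y)‖ₑ ∂(Measure.pi fun _ => μ) ≤ ENNReal.ofReal B) :
    Integrable f (Measure.pi fun _ => μ) :=
  ⟨hf.aestronglyMeasurable, (lintegral_pi_le_of_lintegral_cons_le hf.enorm hB).trans_lt <|
    ENNReal.mul_lt_top ENNReal.ofReal_lt_top (measure_lt_top μ _)⟩

theorem norm_integral_pi_le_of_lintegral_cons_le [IsFiniteMeasure μ] [NormedSpace ℝ V]
    (hf : StronglyMeasurable f) (hB₀ : 0 ≤ B)
    (hB : ∀ᵐ x ∂μ, ∫⁻ y, ‖f (Fin.cons x y)‖ₑ ∂(Measure.pi fun _ => μ) ≤ ENNReal.ofReal B) :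
    ‖∫ x, f x ∂(Measure.pi fun _ => μ)‖ ≤ B * μ.real Set.univ := by
  rw [← ENNReal.ofReal_le_ofReal_iff (by positivity), ofReal_norm, ENNReal.ofReal_mul hB₀,
    ofReal_measureReal]
  exact (enorm_integral_le_lintegral_enorm f).trans
    (lintegral_pi_le_of_lintegral_cons_le hf.enorm hB)

end ProductMeasure

namespace CF

variable {E : Type} [MeasurableSpace E] {μ : Measure E}

theorem integrable_unit (n : ℕ) :
    Integrable (unit n : (Fin n → E) → ℝ) (Measure.pi fun _ => μ) := by
  cases n with
  | zero => rw [Measure.pi_of_empty]; exact integrable_const _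
  | succ n => exact integrable_zero _ _ _

section Convolution

variable [SigmaFinite μ] {n : ℕ}

theorem measurePreserving_sub_sub_compl (I : Finset (Fin n)) :
    MeasurePreserving (fun x : Fin n → E => (sub x I, sub x Iᶜ)) (Measure.pi fun _ => μ)
      ((Measure.pi fun _ => μ).prod (Measure.pi fun _ => μ)) :=
  (measurePreserving_sumPiEquivProdPi (X := fun _ : Fin #I ⊕ Fin #Iᶜ => E) fun _ => μ).comp
    (measurePreserving_piCongrLeft (fun _ : Fin n => μ) (finSumEquivOfFinset rfl rfl)).symm

theorem integrable_mul_sub_compl {I : Finset (Fin n)} {f : (Fin #I → E) → ℝ}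
    {g : (Fin #Iᶜ → E) → ℝ} (hf : Integrable f (Measure.pi fun _ => μ))
    (hg : Integrable g (Measure.pi fun _ => μ)) :
    Integrable (fun x => f (sub x I) * g (sub x Iᶜ)) (Measure.pi fun _ => μ) :=
  (measurePreserving_sub_sub_compl I).integrable_comp_of_integrable (hf.mul_prod hg)

theorem integral_mul_sub_compl {I : Finset (Fin n)} {f : (Fin #I → E) → ℝ}
    {g : (Fin #Iᶜ → E) → ℝ} (hf : AEStronglyMeasurable f (Measure.pi fun _ => μ))
    (hg : AEStronglyMeasurable g (Measure.pi fun _ => μ)) :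
    ∫ x, f (sub x I) * g (sub x Iᶜ) ∂(Measure.pi fun _ => μ) =
      (∫ x, f x ∂(Measure.pi fun _ => μ)) * ∫ x, g x ∂(Measure.pi fun _ => μ) := by
  have split_preserving := measurePreserving_sub_sub_compl (μ := μ) I
  rw [← integral_prod_mul, ← split_preserving.map_eq, integral_map split_preserving.aemeasurable]
  rw [split_preserving.map_eq]
  exact hf.comp_fst.mul hg.comp_snd

variable {F G : CF E}

theorem integrable_conv (hF : ∀ n, Integrable (F n) (Measure.pi fun _ => μ))
    (hG : ∀ n, Integrable (G n) (Measure.pi fun _ => μ)) (n : ℕ) :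
    Integrable (conv F G n) (Measure.pi fun _ => μ) :=
  integrable_finsetSum _ fun I _ => integrable_mul_sub_compl (hF #I) (hG #Iᶜ)

theorem integral_conv (hF : ∀ n, Integrable (F n) (Measure.pi fun _ => μ))
    (hG : ∀ n, Integrable (G n) (Measure.pi fun _ => μ)) (n : ℕ) :
    ∫ x, conv F G n x ∂(Measure.pi fun _ => μ) =
      ∑ kl ∈ antidiagonal n, n.choose kl.1 •
        ((∫ x, F kl.1 x ∂(Measure.pi fun _ => μ)) * ∫ x, G kl.2 x ∂(Measure.pi fun _ => μ)) := by
  simp only [conv]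
  rw [integral_finsetSum _ fun I _ => integrable_mul_sub_compl (hF #I) (hG #Iᶜ)]
  simp only [integral_mul_sub_compl (hF _).aestronglyMeasurable (hG _).aestronglyMeasurable]
  rw [sum_card_card_compl fun k l =>
    (∫ x, F k x ∂(Measure.pi fun _ => μ)) * ∫ x, G l x ∂(Measure.pi fun _ => μ), Fintype.card_fin]

theorem integrable_starPow (hF : ∀ n, Integrable (F n) (Measure.pi fun _ => μ)) (m n : ℕ) :
    Integrable (starPow F m n) (Measure.pi fun _ => μ) := by
  induction m generalizing n with
  | zero => exact integrable_unit n
  | succ m ih => exact integrable_conv hF ih n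

end Convolution

/-- The exponential generating series of the integrals of `F` over `μⁿ`, in the variable `z X`: the
powers of the parameter `z` are absorbed into the coefficients, so that the sum of the coefficients
is the generating function at `z`. The void probability is the case `z = -1`. -/
noncomputable def genSeries (μ : Measure E) (z : ℝ) (F : CF E) : PowerSeries ℝ :=
  PowerSeries.mk fun k => z ^ k / k ! * ∫ y, F k y ∂(Measure.pi fun _ => μ)

section GenSeries

open PowerSeries

variable {z : ℝ} {F G : CF E}

theorem coeff_genSeries (k : ℕ) :
    coeff k (genSeries μ z F) = z ^ k / k ! * ∫ y, F k y ∂(Measure.pi fun _ => μ) :=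
  coeff_mk _ _

theorem constantCoeff_genSeries (hF₀ : F 0 = 0) : constantCoeff (genSeries μ z F) = 0 := by
  rw [← coeff_zero_eq_constantCoeff_apply, coeff_genSeries, hF₀]
  simp only [Pi.zero_apply, integral_zero, mul_zero]

theorem genSeries_unit : genSeries μ z unit = 1 := by
  ext k
  rw [coeff_genSeries, coeff_one]
  cases k with
  | zero => simp [unit, Measure.pi_of_empty fun _ : Fin 0 => μ]
  | succ k => simp [unit]

variable [SigmaFinite μ]

theorem genSeries_conv (hF : ∀ n, Integrable (F n) (Measure.pi fun _ => μ))
    (hG : ∀ n, Integrable (G n) (Measure.pi fun _ => μ)) :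
    genSeries μ z (conv F G) = genSeries μ z F * genSeries μ z G := by
  ext n
  simp only [coeff_mul, coeff_genSeries, integral_conv hF hG, mul_sum, nsmul_eq_mul]
  refine sum_congr rfl fun ⟨k, l⟩ hkl => ?_
  obtain rfl : k + l = n := mem_antidiagonal.1 hkl
  rw [Nat.cast_add_choose, pow_add]
  field_simp

theorem genSeries_starPow (hF : ∀ n, Integrable (F n) (Measure.pi fun _ => μ)) (m : ℕ) :
    genSeries μ z (starPow F m) = genSeries μ z F ^ m := by
  induction m with
  | zero => exact genSeries_unit
  | succ m ih => rw [starPow, genSeries_conv hF (integrable_starPow hF m), ih, pow_succ']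

theorem genSeries_starExp (hF₀ : F 0 = 0)
    (hF : ∀ n, Integrable (F n) (Measure.pi fun _ => μ)) :
    genSeries μ z (starExp F) = (exp ℝ).subst (genSeries μ z F) := by
  ext k
  simp only [coeff_exp_subst (constantCoeff_genSeries hF₀), ← genSeries_starPow hF,
    coeff_genSeries, starExp]
  rw [integral_finsetSum _ fun m _ => (integrable_starPow hF m k).const_mul _, mul_sum]
  simp only [integral_const_mul, mul_left_comm]

end GenSeries

section ClusterBound

variable [IsFiniteMeasure μ] {F : CF E} {C c : ℝ}

theorem integrable_of_cluster_bound (hF₀ : F 0 = 0) (hF : ∀ n, Measurable (F n))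
    (hbound : ∀ n, ∀ᵐ x ∂μ, ∫⁻ y, ‖F (n + 1) (Fin.cons x y)‖ₑ ∂(Measure.pi fun _ => μ) ≤
      ENNReal.ofReal (n ! * C * c ^ n)) (n : ℕ) :
    Integrable (F n) (Measure.pi fun _ => μ) := by
  cases n with
  | zero => rw [hF₀]; exact integrable_zero _ _ _
  | succ n => exact integrable_pi_of_lintegral_cons_le (hF _).stronglyMeasurable (hbound n)

theorem summable_norm_coeff_genSeries_of_cluster_bound {z : ℝ} (hF : ∀ n, Measurable (F n))
    (hC : 0 ≤ C) (hc : 0 ≤ c) (hzc : |z| * c < 1)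
    (hbound : ∀ n, ∀ᵐ x ∂μ, ∫⁻ y, ‖F (n + 1) (Fin.cons x y)‖ₑ ∂(Measure.pi fun _ => μ) ≤
      ENNReal.ofReal (n ! * C * c ^ n)) :
    Summable fun k => ‖PowerSeries.coeff k (genSeries μ z F)‖ := by
  rw [← summable_nat_add_iff 1]
  refine ((summable_geometric_of_lt_one (by positivity) hzc).mul_left
    (|z| * C * μ.real Set.univ)).of_nonneg_of_le (fun _ => norm_nonneg _) fun n => ?_
  have factorial_le : (n ! : ℝ) ≤ (n + 1)! := mod_cast Nat.factorial_le n.le_succ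
  calc ‖PowerSeries.coeff (n + 1) (genSeries μ z F)‖
      = |z| ^ (n + 1) / (n + 1)! * ‖∫ y, F (n + 1) y ∂(Measure.pi fun _ => μ)‖ := by
        rw [coeff_genSeries, norm_mul, norm_div, norm_pow, Real.norm_natCast, Real.norm_eq_abs z]
    _ ≤ |z| ^ (n + 1) / (n + 1)! * (n ! * C * c ^ n * μ.real Set.univ) := by
        gcongr
        exact norm_integral_pi_le_of_lintegral_cons_le (hF _).stronglyMeasurable (by positivity)
          (hbound n)
    _ = n ! / (n + 1)! * (|z| * C * μ.real Set.univ * (|z| * c) ^ n) := by ring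
    _ ≤ |z| * C * μ.real Set.univ * (|z| * c) ^ n :=
        mul_le_of_le_one_left (by positivity) (div_le_one_of_le₀ factorial_le (by positivity))

end ClusterBound

end CF

open CF in
theorem void_probability_formula_general {E : Type} [MeasurableSpace E] (μ : Measure E)
    [IsFiniteMeasure μ] (F : CF E) (hF₀ : F 0 = 0) (hF : ∀ n, Measurable (F n)) (C c z : ℝ)
    (hC : 0 ≤ C) (hc : 0 ≤ c) (hzc : |z| * c < 1)
    (hbound : ∀ n, ∀ᵐ x ∂μ, ∫⁻ y, ‖F (n + 1) (Fin.cons x y)‖ₑ ∂(Measure.pi fun _ => μ) ≤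
      ENNReal.ofReal (n ! * C * c ^ n)) :
    Summable (fun k : ℕ => |z ^ k / k ! * ∫ y, F k y ∂(Measure.pi fun _ => μ)|) ∧
    Summable (fun k : ℕ => |z ^ k / k ! * ∫ y, starExp F k y ∂(Measure.pi fun _ => μ)|) ∧
    ∑' k : ℕ, z ^ k / k ! * ∫ y, starExp F k y ∂(Measure.pi fun _ => μ) =
      Real.exp (∑' k : ℕ, z ^ k / k ! * ∫ y, F k y ∂(Measure.pi fun _ => μ)) := by
  simp only [← coeff_genSeries, ← Real.norm_eq_abs]
  have subst_genSeries := PowerSeries.HasSubst.of_constantCoeff_zero'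
    (constantCoeff_genSeries (μ := μ) (z := z) hF₀)
  have summable_genSeries :=
    summable_norm_coeff_genSeries_of_cluster_bound hF hC hc hzc hbound
  rw [genSeries_starExp hF₀ (integrable_of_cluster_bound hF₀ hF hbound),
    ← tsum_coeff_exp_mul_pow]
  exact ⟨summable_genSeries,
    summable_norm_coeff_subst subst_genSeries summable_genSeries
      (summable_norm_coeff_exp_mul_pow _),
    tsum_coeff_subst subst_genSeries summable_genSeries (summable_norm_coeff_exp_mul_pow _)⟩

open CF MeasureTheory in
/-- eq. (2.14): exponential formula for the void probability. -/
theorem void_probability_formula (d : ℕ) (hd : 1 ≤ d)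
    (Λ : Set (Euc d)) (hΛbdd : Bornology.IsBounded Λ) (hΛmeas : MeasurableSet Λ)
    (ρ ρT : CF (Euc d)) (hρ0 : ρ 0 = 1) (hρsymm : IsSymm ρ)
    (hρT0 : ρT 0 = 0) (hρTsymm : IsSymm ρT) (hρTexp : starExp ρT = ρ)
    (hρTmeas : ∀ n, Measurable (ρT n))
    (C c : ℝ) (hC : 0 < C) (hc0 : 0 < c) (hc : c < 1 / 2)
    (hbound : ∀ (n : ℕ) (x : Euc d),
      ∫⁻ y, ENNReal.ofReal |ρT (n + 1) (Fin.cons x y)| ∂(piRestrict d Λ n) ≤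
        ENNReal.ofReal (n.factorial * C * c ^ n)) :
    Summable (fun k : ℕ =>
      |(-1 : ℝ) ^ k / k.factorial * ∫ y, ρT k y ∂(piRestrict d Λ k)|) ∧
    Summable (fun k : ℕ =>
      |(-1 : ℝ) ^ k / k.factorial * ∫ y, ρ k y ∂(piRestrict d Λ k)|) ∧
    ∑' k : ℕ, (-1 : ℝ) ^ k / k.factorial * ∫ y, ρ k y ∂(piRestrict d Λ k) =
      Real.exp
        (∑' k : ℕ, (-1 : ℝ) ^ k / k.factorial * ∫ y, ρT k y ∂(piRestrict d Λ k)) := by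
  subst hρTexp
  have : Fact (volume Λ < ⊤) := ⟨hΛbdd.measure_lt_top⟩
  exact void_probability_formula_general (volume.restrict Λ) ρT hρT0 hρTmeas C c (-1) hC.le hc0.le
    (by rw [abs_neg, abs_one]; linarith)
    fun n => .of_forall (by simpa only [Real.enorm_eq_ofReal_abs] using! hbound n)
end
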